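/- Let F = {f₁,…,f_k} be an IFS of similarities on ℝ^d satisfying the open set condition with factors c_i ∈ (0,1) and attractor K of positive diameter, equipped with its natural fractal structure. Then dim³(K) = dim_B(K) = dim_H(K), where dim³ is the fractal dimension III with respect to the natural fractal structure, dim_B is box dimension, and dim_H is Hausdorff dimension; all equal the unique s with ∑_i c_i^s = 1. -/

import Mathlib

open Metric Set Filter Topology MeasureTheory ENNReal NNReal

noncomputable section

/-- A map is a similarity with factor `c` if it scales all distances exactly by `c`. -/
def IsSimilarity {X : Type*} [MetricSpace X] (f : X → X) (c : ℝ) : Prop :=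
  ∀ x y, dist (f x) (f y) = c * dist x y

/-- Composition `f_{ω₁} ∘ ⋯ ∘ f_{ω_n}` of the maps of an IFS along a word `ω`. -/
def wordComp {X : Type*} {k : ℕ} (f : Fin k → X → X) {n : ℕ} (ω : Fin n → Fin k) : X → X :=
  (List.ofFn fun i => f (ω i)).foldr (· ∘ ·) id

/-- Number of elements of level `Γ_n` of the natural fractal structure (counted with
multiplicity over words) that meet `K`. -/
def levelCount {X : Type*} [MetricSpace X] {k : ℕ} (f : Fin k → X → X) (K : Set X)
    (n : ℕ) : ℕ :=
  Set.ncard {ω : Fin n → Fin k | ((wordComp f ω '' K) ∩ K).Nonempty}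

/-- `δ(K, Γ_n)`: supremum of diameters of the elements of level `Γ_n` meeting `K`. -/
def deltaLevel {X : Type*} [MetricSpace X] {k : ℕ} (f : Fin k → X → X) (K : Set X)
    (n : ℕ) : ℝ :=
  sSup {d : ℝ | ∃ ω : Fin n → Fin k, ((wordComp f ω '' K) ∩ K).Nonempty ∧
    d = Metric.diam (wordComp f ω '' K)}

/-- `N_δ(K)`: the largest number of disjoint closed balls of radius `δ` with centres in `K`. -/
def packingNum {X : Type*} [MetricSpace X] (K : Set X) (δ : ℝ) : ℕ :=
  sSup {m : ℕ | ∃ t : Finset X, t.card = m ∧ ↑t ⊆ K ∧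
    (t : Set X).Pairwise fun x y => Disjoint (Metric.closedBall x δ) (Metric.closedBall y δ)}

/-- The pre-measure `H^s_{n,3}(K)`: infimum over whole levels `m ≥ n` of the sum of the
`s`-th powers of the diameters of all elements of that level (with multiplicity). -/
def H3pre {X : Type*} [MetricSpace X] {k : ℕ} (f : Fin k → X → X) (K : Set X)
    (s : ℝ) (n : ℕ) : ℝ≥0∞ :=
  ⨅ m : {m : ℕ // n ≤ m}, ∑ ω : Fin m.1 → Fin k,
    ENNReal.ofReal (Metric.diam (wordComp f ω '' K)) ^ s

/-- `H^s_3(K)`: the (monotone) limit of `H^s_{n,3}(K)` as `n → ∞`. -/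
def H3 {X : Type*} [MetricSpace X] {k : ℕ} (f : Fin k → X → X) (K : Set X) (s : ℝ) : ℝ≥0∞ :=
  ⨆ n : ℕ, H3pre f K s n

/-- `H^s_4(K)`: limit over `n` of the infimum over finite covers of `K` by elements of
levels `≥ n` of the natural fractal structure. -/
def H4 {X : Type*} [MetricSpace X] {k : ℕ} (f : Fin k → X → X) (K : Set X) (s : ℝ) : ℝ≥0∞ :=
  ⨆ n : ℕ, ⨅ (𝒜 : Set (Set X)) (_ : 𝒜.Finite ∧
      (∀ A ∈ 𝒜, ∃ m, n ≤ m ∧ ∃ ω : Fin m → Fin k, A = wordComp f ω '' K) ∧ K ⊆ ⋃₀ 𝒜),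
    ∑' A : 𝒜, ENNReal.ofReal (Metric.diam (A : Set X)) ^ s

/-- `H^s_5(K)`: limit over `n` of the infimum over countable covers of `K` by elements of
levels `≥ n` of the natural fractal structure. -/
def H5 {X : Type*} [MetricSpace X] {k : ℕ} (f : Fin k → X → X) (K : Set X) (s : ℝ) : ℝ≥0∞ :=
  ⨆ n : ℕ, ⨅ (𝒜 : Set (Set X)) (_ : 𝒜.Countable ∧
      (∀ A ∈ 𝒜, ∃ m, n ≤ m ∧ ∃ ω : Fin m → Fin k, A = wordComp f ω '' K) ∧ K ⊆ ⋃₀ 𝒜),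
    ∑' A : 𝒜, ENNReal.ofReal (Metric.diam (A : Set X)) ^ s

/-- `H^s_6(K)`: limit as `δ → 0` of the infimum over countable covers of `K` by
fractal-structure elements of diameter at most `δ`. -/
def H6 {X : Type*} [MetricSpace X] {k : ℕ} (f : Fin k → X → X) (K : Set X) (s : ℝ) : ℝ≥0∞ :=
  ⨆ (δ : ℝ) (_ : 0 < δ), ⨅ (𝒜 : Set (Set X)) (_ : 𝒜.Countable ∧
      (∀ A ∈ 𝒜, (∃ m, ∃ ω : Fin m → Fin k, A = wordComp f ω '' K) ∧ Metric.diam A ≤ δ) ∧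
      K ⊆ ⋃₀ 𝒜),
    ∑' A : 𝒜, ENNReal.ofReal (Metric.diam (A : Set X)) ^ s

/-- The open set condition for a family of self-maps of `ℝ^d`. -/
def OSC {d k : ℕ} (f : Fin k → EuclideanSpace ℝ (Fin d) → EuclideanSpace ℝ (Fin d)) : Prop :=
  ∃ V : Set (EuclideanSpace ℝ (Fin d)), V.Nonempty ∧ IsOpen V ∧ Bornology.IsBounded V ∧
    (∀ i, f i '' V ⊆ V) ∧ Pairwise fun i j => Disjoint (f i '' V) (f j '' V)

/-!
Hutchinson's self-similar probability measure `ν = ∑ i, c i ^ s • ν.map (f i)` is Ahlfors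
`s`-regular on `K`, and regularity yields both the box and the Hausdorff dimension.

Regularity is proved by zooming in: since every factor lies in a compact subinterval of `(0, 1)`,
a scale-covariant estimate at scales of order `1` propagates to all smaller scales. For the lower
bound, a ball around a point of `f i '' K` contains a copy of a ball whose radius is larger by the
factor `1 / c i`. For the upper bound, `ν` is compared with volume: the disjoint copies `f i '' V`
compete for room, so the mass of `A` at scale `ρ` is at most `ρ ^ (s - Q)` times the volume of `V`
near `A`, up to a constant, where `Q` is the dimension of the ambient space.

For dimension III nothing but the similarity ratios matters: the `t`-th powers of the diameters at
level `n` add up to exactly `diam K ^ t * (∑ i, c i ^ t) ^ n`.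
-/

/-! ### Similarities -/

namespace IsSimilarity

variable {X : Type*} [MetricSpace X] {f g : X → X} {a b : ℝ}

lemma comp (hf : IsSimilarity f a) (hg : IsSimilarity g b) : IsSimilarity (f ∘ g) (a * b) :=
  fun x y => by rw [Function.comp, Function.comp, hf, hg, mul_assoc]

lemma wordComp {k : ℕ} {f : Fin k → X → X} {c : Fin k → ℝ} (hf : ∀ i, IsSimilarity (f i) (c i))
    {n : ℕ} (ω : Fin n → Fin k) : IsSimilarity (wordComp f ω) (∏ i, c (ω i)) := by
  induction n with
  | zero => intro x y; simp [_root_.wordComp]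
  | succ n ih =>
    have hcons : _root_.wordComp f ω = f (ω 0) ∘ _root_.wordComp f (fun i => ω i.succ) := by
      simp [_root_.wordComp, List.ofFn_succ]
    rw [hcons, Fin.prod_univ_succ]
    exact (hf _).comp (ih _)

lemma lipschitzWith (hf : IsSimilarity f a) : LipschitzWith a.toNNReal f :=
  LipschitzWith.of_dist_le_mul fun x y => by
    rw [hf]
    gcongr
    exact a.le_coe_toNNReal

lemma antilipschitzWith (hf : IsSimilarity f a) (ha : 0 < a) :
    AntilipschitzWith a.toNNReal⁻¹ f :=
  AntilipschitzWith.of_le_mul_dist fun x y => by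
    rw [hf, NNReal.coe_inv, Real.coe_toNNReal a ha.le, inv_mul_cancel_left₀ ha.ne']

lemma measurableEmbedding [CompleteSpace X] [MeasurableSpace X] [BorelSpace X]
    (hf : IsSimilarity f a) (ha : 0 < a) : MeasurableEmbedding f :=
  ((hf.antilipschitzWith ha).isClosedEmbedding
    hf.lipschitzWith.uniformContinuous).measurableEmbedding

lemma ediam_image (hf : IsSimilarity f a) (ha : 0 < a) (A : Set X) :
    ediam (f '' A) = ENNReal.ofReal a * ediam A := by
  refine (hf.lipschitzWith.ediam_image_le A).antisymm ?_
  have ha' : a.toNNReal ≠ 0 := (Real.toNNReal_pos.2 ha).ne'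
  have h := (hf.antilipschitzWith ha).le_mul_ediam_image A
  rwa [ENNReal.coe_inv ha', ← ENNReal.div_eq_inv_mul,
    ENNReal.le_div_iff_mul_le (by simp [ha]) (by simp), mul_comm] at h

lemma diam_image (hf : IsSimilarity f a) (ha : 0 < a) (A : Set X) :
    diam (f '' A) = a * diam A := by
  rw [diam, hf.ediam_image ha, ENNReal.toReal_mul, ENNReal.toReal_ofReal ha.le, diam]

lemma hausdorffMeasure_image [MeasurableSpace X] [BorelSpace X] (hf : IsSimilarity f a)
    (ha : 0 < a) {Q : ℝ} (hQ : 0 ≤ Q) (A : Set X) :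
    μH[Q] (f '' A) = ENNReal.ofReal a ^ Q * μH[Q] A := by
  refine (hf.lipschitzWith.hausdorffMeasure_image_le hQ A).antisymm ?_
  have ha' : a.toNNReal ≠ 0 := (Real.toNNReal_pos.2 ha).ne'
  have h := (hf.antilipschitzWith ha).le_hausdorffMeasure_image hQ A
  rwa [ENNReal.coe_inv ha', ENNReal.inv_rpow, ← ENNReal.div_eq_inv_mul,
    ENNReal.le_div_iff_mul_le (by simp [ha]) (by simp [hQ]), mul_comm] at h

lemma image_thickening_preimage_subset (hf : IsSimilarity f a) (ha : 0 < a) (A : Set X) (δ : ℝ) :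
    f '' thickening (δ / a) (f ⁻¹' A) ⊆ thickening δ A := by
  rintro _ ⟨x, hx, rfl⟩
  obtain ⟨z, hz, hxz⟩ := mem_thickening_iff.1 hx
  refine mem_thickening_iff.2 ⟨f z, hz, ?_⟩
  rwa [hf, ← lt_div_iff₀' ha]

lemma preimage_closedBall (hf : IsSimilarity f a) (ha : 0 < a) (x : X) (r : ℝ) :
    f ⁻¹' closedBall (f x) r = closedBall x (r / a) := by
  ext y
  rw [mem_preimage, mem_closedBall, mem_closedBall, hf, le_div_iff₀' ha]

end IsSimilarity

/-! ### Self-similar measures -/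

/-- `ν` is a self-similar measure (Hutchinson's invariant measure) of the iterated function system
`f` with weights `p`; the weights are real, and negative ones count as `0`. -/
def IsSelfSimilarMeasure {X ι : Type*} [Fintype ι] [MeasurableSpace X] (f : ι → X → X) (p : ι → ℝ)
    (ν : Measure X) : Prop :=
  ν = ∑ i, ENNReal.ofReal (p i) • ν.map (f i)

/-- Prepends the letter `z.1` to the infinite word `z.2`. -/
def consWord {ι : Type*} (z : ι × (ℕ → ι)) : ℕ → ι
  | 0 => z.1
  | n + 1 => z.2 n

lemma measurable_consWord {ι : Type*} [MeasurableSpace ι] :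
    Measurable (consWord : ι × (ℕ → ι) → ℕ → ι) :=
  measurable_pi_iff.2 fun n => by
    cases n with
    | zero => exact measurable_fst
    | succ n => exact (measurable_pi_apply n).comp measurable_snd

lemma map_consWord_prod_infinitePi {ι : Type*} [MeasurableSpace ι] (P : Measure ι)
    [IsProbabilityMeasure P] :
    (P.prod (Measure.infinitePi fun _ : ℕ => P)).map consWord =
      Measure.infinitePi fun _ : ℕ => P := by
  classical
  refine Measure.eq_infinitePi _ fun s t ht => ?_
  obtain ⟨n, hn⟩ := s.exists_nat_subset_range
  have hs : s ⊆ Finset.range (n + 1) := hn.trans (Finset.range_mono n.le_succ)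
  let u (i : ℕ) : Set ι := if i ∈ s then t i else univ
  have hu (i : ℕ) : MeasurableSet (u i) := by
    unfold u
    split_ifs
    exacts [ht i, .univ]
  have hpre : consWord ⁻¹' Set.pi s t =
      u 0 ×ˢ Set.pi (Finset.range n) (fun i => u (i + 1)) := by
    ext ⟨x, ω⟩
    have hmem (y : ℕ → ι) : y ∈ Set.pi s t ↔ ∀ i ∈ Finset.range (n + 1), y i ∈ u i := by
      refine ⟨fun h i _ => ?_, fun h i hi => by simpa [u, Finset.mem_coe.1 hi] using h i (hs hi)⟩
      by_cases hi : i ∈ s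
      · simpa [u, hi] using h i hi
      · simp [u, hi]
    rw [mem_preimage, hmem]
    simp only [Finset.mem_range, Nat.forall_lt_succ_left]
    simp [consWord]
  calc (P.prod (Measure.infinitePi fun _ : ℕ => P)).map consWord (Set.pi s t)
      = P (u 0) * ∏ i ∈ Finset.range n, P (u (i + 1)) := by
        rw [Measure.map_apply measurable_consWord
          (.pi s.countable_toSet fun i _ => ht i), hpre, Measure.prod_prod,
          Measure.infinitePi_pi _ fun i _ => hu (i + 1)]
    _ = ∏ i ∈ Finset.range (n + 1), P (u i) := by rw [Finset.prod_range_succ', mul_comm]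
    _ = ∏ i ∈ s, P (u i) :=
        (Finset.prod_subset hs fun i _ hi => by simp [u, hi]).symm
    _ = ∏ i ∈ s, P (t i) := Finset.prod_congr rfl fun i hi => by simp [u, hi]

lemma exists_coding {ι Y : Type*} [Finite ι] [TopologicalSpace ι] [DiscreteTopology ι]
    [MetricSpace Y] [CompleteSpace Y] [Nonempty Y] {f : ι → Y → Y} {b : ℝ≥0} (hb : b < 1)
    (hf : ∀ i, LipschitzWith b (f i)) :
    ∃ π : C(ℕ → ι, Y), ∀ i ω, π (consWord (i, ω)) = f i (π ω) := by
  let Φ (φ : C(ℕ → ι, Y)) : C(ℕ → ι, Y) :=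
    ⟨fun ω => f (ω 0) (φ fun n => ω (n + 1)), by
      have hcont : Continuous fun z : ι × Y => f z.1 z.2 :=
        continuous_prod_of_discrete_left.2 fun i => (hf i).continuous
      fun_prop⟩
  have hΦ : ContractingWith b Φ := by
    refine ⟨hb, LipschitzWith.of_dist_le_mul fun φ ψ => ?_⟩
    refine (ContinuousMap.dist_le (by positivity)).2 fun ω => ?_
    refine ((hf (ω 0)).dist_le_mul _ _).trans ?_
    gcongr
    exact ContinuousMap.dist_apply_le_dist _
  obtain ⟨y⟩ := ‹Nonempty Y›
  have : Nonempty C(ℕ → ι, Y) := ⟨.const _ y⟩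
  refine ⟨hΦ.fixedPoint, fun i ω => ?_⟩
  conv_lhs => rw [← hΦ.fixedPoint_isFixedPt]
  rfl

namespace IsSelfSimilarMeasure

variable {X ι : Type*} [Fintype ι] [MeasurableSpace X] {f : ι → X → X} {p : ι → ℝ}

lemma measureReal_eq_sum {ν : Measure X} [IsFiniteMeasure ν] (hν : IsSelfSimilarMeasure f p ν)
    (hp : ∀ i, 0 ≤ p i) (hf : ∀ i, Measurable (f i)) {A : Set X} (hA : MeasurableSet A) :
    ν.real A = ∑ i, p i * ν.real (f i ⁻¹' A) := by
  conv_lhs => rw [hν]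
  simp [Measure.real, Measure.map_apply (hf _) hA, ENNReal.toReal_sum, ENNReal.mul_eq_top, hp]

lemma exists_isProbabilityMeasure [MetricSpace X] [BorelSpace X] (hp : ∀ i, 0 ≤ p i)
    (hsum : ∑ i, p i = 1) {b : ℝ≥0} (hb : b < 1) (hf : ∀ i, LipschitzWith b (f i)) {K : Set X}
    (hne : K.Nonempty) (hK : IsComplete K) (hmaps : ∀ i, MapsTo (f i) K K) :
    ∃ ν : Measure X, IsProbabilityMeasure ν ∧ IsSelfSimilarMeasure f p ν ∧ ∀ᵐ x ∂ν, x ∈ K := by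
  let _ : TopologicalSpace ι := ⊥
  have : DiscreteTopology ι := ⟨rfl⟩
  let _ : MeasurableSpace ι := ⊤
  have := hK.completeSpace_coe
  have := hne.to_subtype
  obtain ⟨π, hπ⟩ := exists_coding hb fun i => (hf i).lipschitzOnWith.mapsToRestrict (hmaps i)
  let P : Measure ι := Measure.sum fun i => ENNReal.ofReal (p i) • Measure.dirac i
  have hP : IsProbabilityMeasure P := ⟨by
    simp [P, ← ENNReal.ofReal_sum_of_nonneg fun i _ => hp i, hsum]⟩
  let W : Measure (ℕ → ι) := Measure.infinitePi fun _ => P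
  let φ (ω : ℕ → ι) : X := π ω
  have hφ : Measurable φ := (continuous_subtype_val.comp π.continuous).measurable
  have hφcons (i : ι) : φ ∘ consWord ∘ Prod.mk i = f i ∘ φ :=
    funext fun ω => congrArg Subtype.val (hπ i ω)
  refine ⟨W.map φ, Measure.isProbabilityMeasure_map hφ.aemeasurable, ?_,
    (ae_map_iff hφ.aemeasurable hK.isClosed.measurableSet).2 (ae_of_all _ fun ω => (π ω).2)⟩
  calc W.map φ = ((P.prod W).map consWord).map φ := by rw [map_consWord_prod_infinitePi]
    _ = Measure.sum fun i => ENNReal.ofReal (p i) • W.map (φ ∘ consWord ∘ Prod.mk i) := by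
      rw [Measure.map_map hφ measurable_consWord, Measure.prod_sum_left,
        Measure.map_sum (hφ.comp measurable_consWord).aemeasurable]
      congr! 2 with i
      rw [Measure.prod_smul_left, Measure.map_smul, Measure.dirac_prod,
        Measure.map_map (hφ.comp measurable_consWord) measurable_prodMk_left]
      rfl
    _ = ∑ i, ENNReal.ofReal (p i) • (W.map φ).map (f i) := by
      simp_rw [hφcons, Measure.sum_fintype, ← Measure.map_map (hf _).continuous.measurable hφ]

end IsSelfSimilarMeasure

/-! ### Growth of the self-similar measure -/

lemma scale_induction {ι : Type*} {c : ι → ℝ} {a b R : ℝ} (ha : 0 < a) (hb : b < 1) (hR : 0 < R)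
    (hc : ∀ i, c i ∈ Icc a b) {P : ℝ → Prop} (hbase : ∀ r ∈ Icc R (R / a), P r)
    (hstep : ∀ r ∈ Ioo 0 R, (∀ i, P (r / c i)) → P r) {r : ℝ} (hr : r ∈ Ioc 0 (R / a)) : P r := by
  obtain ⟨n, hn⟩ := exists_pow_lt_of_lt_one (div_pos hr.1 hR) hb
  replace hn : R * b ^ n ≤ r := ((lt_div_iff₀' hR).1 hn).le
  induction n generalizing r with
  | zero => exact hbase r ⟨by simpa using hn, hr.2⟩
  | succ n ih =>
    rcases le_or_gt R r with hRr | hrR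
    · exact hbase r ⟨hRr, hr.2⟩
    refine hstep r ⟨hr.1, hrR⟩ fun i => ?_
    have hi : 0 < c i := ha.trans_le (hc i).1
    have hb0 : 0 < b := hi.trans_le (hc i).2
    refine ih ⟨div_pos hr.1 hi, div_le_div₀ hR.le hrR.le ha (hc i).1⟩ ((le_div_iff₀ hi).2 ?_)
    calc R * b ^ n * c i ≤ R * b ^ n * b := by gcongr; exact (hc i).2
      _ ≤ r := by rwa [mul_assoc, ← pow_succ]

namespace IsSelfSimilarMeasure

variable {X ι : Type*} [Fintype ι] [MetricSpace X] [MeasurableSpace X] [BorelSpace X]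
  {f : ι → X → X} {c : ι → ℝ} {s a b : ℝ} {ν : Measure X} [IsProbabilityMeasure ν] {K : Set X}

lemma rpow_le_measureReal_closedBall (hν : IsSelfSimilarMeasure f (fun i => c i ^ s) ν)
    (hs : 0 ≤ s) (ha : 0 < a) (hb : b < 1) (hc : ∀ i, c i ∈ Icc a b)
    (hf : ∀ i, IsSimilarity (f i) (c i)) (hνK : ∀ᵐ x ∂ν, x ∈ K) (hbdd : Bornology.IsBounded K)
    (hK : K ⊆ ⋃ i, f i '' K) (hdiam : 0 < diam K) {r : ℝ} (hr : r ∈ Ioc 0 (diam K / a)) :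
    ∀ x ∈ K, (a * (r / diam K)) ^ s ≤ ν.real (closedBall x r) := by
  have hc0 (i : ι) : 0 < c i := ha.trans_le (hc i).1
  refine scale_induction
    (P := fun r => ∀ x ∈ K, (a * (r / diam K)) ^ s ≤ ν.real (closedBall x r))
    ha hb hdiam hc (fun r hr x hx => ?_) (fun r hr ih x hx => ?_) hr
  · have hball : ∀ᵐ y ∂ν, y ∈ closedBall x r :=
      hνK.mono fun y hy => (dist_le_diam_of_mem hbdd hy hx).trans hr.1
    have hr0 : 0 < r := hdiam.trans_le hr.1
    rw [measureReal_def, mem_ae_iff_prob_eq_one measurableSet_closedBall |>.1 hball,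
      ENNReal.toReal_one]
    refine Real.rpow_le_one (by positivity) ?_ hs
    rw [← mul_div_assoc, div_le_one hdiam, ← le_div_iff₀' ha]
    exact hr.2
  · obtain ⟨i, y, hy, rfl⟩ := mem_iUnion.1 (hK hx)
    calc (a * (r / diam K)) ^ s
        = c i ^ s * (a * (r / c i / diam K)) ^ s := by
          have := hr.1
          have := hc0 i
          rw [← Real.mul_rpow (by positivity) (by positivity)]
          congr 1
          field_simp
      _ ≤ c i ^ s * ν.real (f i ⁻¹' closedBall (f i y) r) := by
          rw [(hf i).preimage_closedBall (hc0 i)]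
          gcongr
          exacts [Real.rpow_nonneg (hc0 i).le s, ih i y hy]
      _ ≤ ∑ j, c j ^ s * ν.real (f j ⁻¹' closedBall (f i y) r) :=
          Finset.single_le_sum (f := fun j => c j ^ s * ν.real (f j ⁻¹' closedBall (f i y) r))
            (fun j _ => mul_nonneg (Real.rpow_nonneg (hc0 j).le s) measureReal_nonneg)
            (Finset.mem_univ i)
      _ = ν.real (closedBall (f i y) r) :=
          (hν.measureReal_eq_sum (fun j => Real.rpow_nonneg (hc0 j).le s)
            (fun j => (hf j).lipschitzWith.continuous.measurable) measurableSet_closedBall).symm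

end IsSelfSimilarMeasure

lemma rpow_sub_mul_rpow_le_one {a s Q ρ : ℝ} (ha : 0 < a) (hs : 0 ≤ s) (hQ : 0 ≤ Q)
    (hρ : ρ ∈ Icc 1 (1 / a)) : ρ ^ (Q - s) * a ^ Q ≤ 1 := by
  have hρ0 : 0 < ρ := one_pos.trans_le hρ.1
  calc ρ ^ (Q - s) * a ^ Q ≤ ρ ^ Q * a ^ Q := by
        gcongr
        exacts [hρ.1, sub_le_self Q hs]
    _ = (ρ * a) ^ Q := (Real.mul_rpow hρ0.le ha.le).symm
    _ ≤ 1 := Real.rpow_le_one (by positivity) ((le_div_iff₀ ha).1 hρ.2) hQ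

section Volume

variable {X ι : Type*} [Fintype ι] [MetricSpace X] [CompleteSpace X] [MeasurableSpace X]
  [BorelSpace X] {f : ι → X → X} {c : ι → ℝ} {Q : ℝ} {V : Set X}

lemma sum_rpow_mul_hausdorffMeasureReal_le (hQ : 0 ≤ Q) (hc : ∀ i, 0 < c i)
    (hf : ∀ i, IsSimilarity (f i) (c i)) (hV : MeasurableSet V) (hVfin : μH[Q] V ≠ ∞)
    (hVsub : ∀ i, f i '' V ⊆ V) (hVdisj : Pairwise fun i j => Disjoint (f i '' V) (f j '' V))
    (A : Set X) (δ : ℝ) :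
    ∑ i, c i ^ Q * (μH[Q]).real (V ∩ thickening (δ / c i) (f i ⁻¹' A)) ≤
      (μH[Q]).real (V ∩ thickening δ A) := by
  let U (i : ι) : Set X := V ∩ thickening (δ / c i) (f i ⁻¹' A)
  have hU (i : ι) : c i ^ Q * (μH[Q]).real (U i) = (μH[Q]).real (f i '' U i) := by
    rw [measureReal_def, measureReal_def, (hf i).hausdorffMeasure_image (hc i) hQ,
      ENNReal.toReal_mul, ← ENNReal.toReal_rpow, ENNReal.toReal_ofReal (hc i).le]
  have hfinite {S : Set X} (hS : S ⊆ V) : μH[Q] S ≠ ∞ := measure_ne_top_of_subset hS hVfin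
  have himage (i : ι) : f i '' U i ⊆ V ∩ thickening δ A :=
    (image_inter_subset _ _ _).trans
      (inter_subset_inter (hVsub i) ((hf i).image_thickening_preimage_subset (hc i) A δ))
  calc ∑ i, c i ^ Q * (μH[Q]).real (U i) = (μH[Q]).real (⋃ i, f i '' U i) := by
        simp_rw [hU]
        refine (measureReal_iUnion_fintype (fun i j hij => ?_) (fun i => ?_) fun i =>
          hfinite ((himage i).trans inter_subset_left)).symm
        · exact (hVdisj hij).mono (image_mono inter_subset_left) (image_mono inter_subset_left)
        · exact ((hf i).measurableEmbedding (hc i)).measurableSet_image.2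
            (hV.inter isOpen_thickening.measurableSet)
    _ ≤ (μH[Q]).real (V ∩ thickening δ A) :=
        measureReal_mono (iUnion_subset himage) (hfinite inter_subset_left)

variable {s a b E : ℝ} {ν : Measure X} [IsProbabilityMeasure ν] {K : Set X}

lemma IsSelfSimilarMeasure.measureReal_mul_le_hausdorffMeasureReal_thickening
    (hν : IsSelfSimilarMeasure f (fun i => c i ^ s) ν) (hs : 0 ≤ s) (hQ : 0 ≤ Q) (ha : 0 < a)
    (hb : b < 1) (hc : ∀ i, c i ∈ Icc a b) (hf : ∀ i, IsSimilarity (f i) (c i))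
    (hνK : ∀ᵐ x ∂ν, x ∈ K) (hV : MeasurableSet V) (hVfin : μH[Q] V ≠ ∞)
    (hVsub : ∀ i, f i '' V ⊆ V) (hVdisj : Pairwise fun i j => Disjoint (f i '' V) (f j '' V))
    (hE : ∀ v ∈ V, ∀ y ∈ K, dist v y < E) {ρ : ℝ} (hρ : ρ ∈ Ioc 0 (1 / a)) :
    ∀ A, MeasurableSet A → ν.real A * ρ ^ (Q - s) * (a ^ Q * (μH[Q]).real V) ≤
      (μH[Q]).real (V ∩ thickening (E * ρ) A) := by
  have hc0 (i : ι) : 0 < c i := ha.trans_le (hc i).1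
  refine scale_induction (P := fun ρ => ∀ A, MeasurableSet A →
      ν.real A * ρ ^ (Q - s) * (a ^ Q * (μH[Q]).real V) ≤
        (μH[Q]).real (V ∩ thickening (E * ρ) A))
    ha hb one_pos hc (fun ρ hρ A _ => ?_) (fun ρ hρ ih A hA => ?_) hρ
  · rcases (A ∩ K).eq_empty_or_nonempty with hAK | ⟨y, hyA, hyK⟩
    · have : ν A = 0 := measure_mono_null (disjoint_iff_inter_eq_empty.2 hAK).subset_compl_right hνK
      simp [measureReal_def, this]
    have hVthick : V ⊆ thickening (E * ρ) A := fun v hv => by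
      have hvy := hE v hv y hyK
      exact mem_thickening_iff.2
        ⟨y, hyA, hvy.trans_le (le_mul_of_one_le_right (dist_nonneg.trans hvy.le) hρ.1)⟩
    have hρ0 : 0 < ρ := one_pos.trans_le hρ.1
    rw [inter_eq_left.2 hVthick]
    calc ν.real A * ρ ^ (Q - s) * (a ^ Q * (μH[Q]).real V)
        = ν.real A * (ρ ^ (Q - s) * a ^ Q) * (μH[Q]).real V := by ring
      _ ≤ 1 * 1 * (μH[Q]).real V := by
          gcongr
          exacts [measureReal_le_one, rpow_sub_mul_rpow_le_one ha hs hQ hρ]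
      _ = (μH[Q]).real V := by ring
  · calc ν.real A * ρ ^ (Q - s) * (a ^ Q * (μH[Q]).real V)
        = ∑ i, c i ^ Q *
            (ν.real (f i ⁻¹' A) * (ρ / c i) ^ (Q - s) * (a ^ Q * (μH[Q]).real V)) := by
          rw [hν.measureReal_eq_sum (fun i => Real.rpow_nonneg (hc0 i).le s)
            (fun i => (hf i).lipschitzWith.continuous.measurable) hA, Finset.sum_mul,
            Finset.sum_mul]
          refine Finset.sum_congr rfl fun i _ => ?_
          -- the factor `ρ ^ (Q - s)` turns the mass scaling `c i ^ s` into `c i ^ Q`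
          have := Real.rpow_pos_of_pos (hc0 i) Q
          have := Real.rpow_pos_of_pos (hc0 i) s
          rw [Real.div_rpow hρ.1.le (hc0 i).le, Real.rpow_sub (hc0 i)]
          field_simp
      _ ≤ ∑ i, c i ^ Q * (μH[Q]).real (V ∩ thickening (E * ρ / c i) (f i ⁻¹' A)) := by
          gcongr with i
          · exact Real.rpow_nonneg (hc0 i).le Q
          · rw [mul_div_assoc]
            exact ih i _ ((hf i).lipschitzWith.continuous.measurable hA)
      _ ≤ (μH[Q]).real (V ∩ thickening (E * ρ) A) :=
          sum_rpow_mul_hausdorffMeasureReal_le hQ hc0 hf hV hVfin hVsub hVdisj A _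

lemma IsSelfSimilarMeasure.measureReal_closedBall_le
    (hν : IsSelfSimilarMeasure f (fun i => c i ^ s) ν) (hs : 0 ≤ s) (hQ : 0 ≤ Q) (ha : 0 < a)
    (hb : b < 1) (hc : ∀ i, c i ∈ Icc a b) (hf : ∀ i, IsSimilarity (f i) (c i))
    (hνK : ∀ᵐ x ∂ν, x ∈ K) (hV : MeasurableSet V) (hV0 : μH[Q] V ≠ 0) (hVfin : μH[Q] V ≠ ∞)
    (hVsub : ∀ i, f i '' V ⊆ V) (hVdisj : Pairwise fun i j => Disjoint (f i '' V) (f j '' V))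
    (hE0 : 0 < E) (hE : ∀ v ∈ V, ∀ y ∈ K, dist v y < E) {M : ℝ} (hM : 0 ≤ M)
    (hball : ∀ x : X, ∀ r > 0, μH[Q] (closedBall x r) ≤ ENNReal.ofReal (M * r ^ Q))
    {ρ : ℝ} (hρ : ρ ∈ Ioc 0 (1 / a)) (x : X) :
    ν.real (closedBall x ρ) ≤ M * (E + 1) ^ Q / (a ^ Q * (μH[Q]).real V) * ρ ^ s := by
  have hρ0 : 0 < ρ := hρ.1
  have hr : 0 < (E + 1) * ρ := by positivity
  have hV0' : 0 < (μH[Q]).real V := ENNReal.toReal_pos hV0 hVfin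
  have hsub : V ∩ thickening (E * ρ) (closedBall x ρ) ⊆ closedBall x ((E + 1) * ρ) :=
    fun y ⟨_, hy⟩ => by
      obtain ⟨z, hz, hyz⟩ := mem_thickening_iff.1 hy
      rw [mem_closedBall, add_one_mul]
      exact (dist_triangle y z x).trans (add_le_add hyz.le hz)
  have hgrowth : (μH[Q]).real (V ∩ thickening (E * ρ) (closedBall x ρ)) ≤
      M * ((E + 1) * ρ) ^ Q :=
    ENNReal.toReal_le_of_le_ofReal (by positivity) ((measure_mono hsub).trans (hball x _ hr))
  rw [div_mul_eq_mul_div, le_div_iff₀ (by positivity)]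
  have hρs : 0 < ρ ^ (Q - s) := by positivity
  refine le_of_mul_le_mul_right ?_ hρs
  calc ν.real (closedBall x ρ) * (a ^ Q * (μH[Q]).real V) * ρ ^ (Q - s)
      = ν.real (closedBall x ρ) * ρ ^ (Q - s) * (a ^ Q * (μH[Q]).real V) := by ring
    _ ≤ M * ((E + 1) * ρ) ^ Q :=
        (hν.measureReal_mul_le_hausdorffMeasureReal_thickening hs hQ ha hb hc hf hνK hV hVfin
          hVsub hVdisj hE hρ _ measurableSet_closedBall).trans hgrowth
    _ = M * (E + 1) ^ Q * ρ ^ s * ρ ^ (Q - s) := by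
        rw [Real.mul_rpow (by positivity) hρ0.le, mul_assoc _ (ρ ^ s), ← Real.rpow_add hρ0,
          add_sub_cancel, mul_assoc]

end Volume

/-! ### Dimensions of Ahlfors regular sets -/

/-- `μ` is Ahlfors `s`-regular on `K`: up to constants, small balls centred on `K` have the measure
of the `s`-th power of their radius. -/
def IsAhlforsRegular {X : Type*} [MetricSpace X] [MeasurableSpace X] (μ : Measure X) (K : Set X)
    (s : ℝ) : Prop :=
  ∃ a > 0, ∃ C > 0, ∃ R > 0, ∀ x ∈ K, ∀ r ∈ Ioc 0 R,
    μ.real (closedBall x r) ∈ Icc (a * r ^ s) (C * r ^ s)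

/-- The finite set `t` of centres in `K` witnesses a packing of `K` by closed balls of radius `δ`,
as in the definition of `packingNum`. -/
def IsBallPacking {X : Type*} [MetricSpace X] (K : Set X) (δ : ℝ) (t : Finset X) : Prop :=
  ↑t ⊆ K ∧ (t : Set X).Pairwise fun x y => Disjoint (closedBall x δ) (closedBall y δ)

section Packing

variable {X : Type*} [MetricSpace X] {K : Set X} {δ : ℝ}

lemma IsBallPacking.insert [DecidableEq X] {t : Finset X} (ht : IsBallPacking K δ t) {y : X}
    (hy : y ∈ K) (hfar : ∀ x ∈ t, 2 * δ < dist x y) : IsBallPacking K δ (insert y t) := by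
  rw [IsBallPacking, Finset.coe_insert]
  have hdisj {x : X} (hx : x ∈ t) : Disjoint (closedBall x δ) (closedBall y δ) :=
    closedBall_disjoint_closedBall (by linarith [hfar x hx])
  exact ⟨insert_subset hy ht.1, ht.2.insert fun x hx _ => ⟨(hdisj hx).symm, hdisj hx⟩⟩

lemma exists_isBallPacking_card_eq_packingNum (hδ : 0 ≤ δ) {B : ℕ}
    (hB : ∀ t : Finset X, IsBallPacking K δ t → t.card ≤ B) :
    ∃ t : Finset X, IsBallPacking K δ t ∧ t.card = packingNum K δ ∧
      K ⊆ ⋃ x ∈ t, closedBall x (2 * δ) := by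
  classical
  have hbdd : BddAbove {m : ℕ | ∃ t : Finset X, t.card = m ∧ IsBallPacking K δ t} :=
    ⟨B, by rintro _ ⟨t, rfl, ht⟩; exact hB t ht⟩
  obtain ⟨t, hcard, ht⟩ : packingNum K δ ∈ {m : ℕ | ∃ t : Finset X, t.card = m ∧
      IsBallPacking K δ t} := Nat.sSup_mem ⟨0, ∅, by simp [IsBallPacking]⟩ hbdd
  refine ⟨t, ht, hcard, fun y hy => ?_⟩
  by_contra hcov
  have hfar : ∀ x ∈ t, 2 * δ < dist x y := by simpa [dist_comm y] using hcov
  have hyt : y ∉ t := fun hyt => by linarith [hfar y hyt, dist_self y]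
  have hle : (insert y t).card ≤ packingNum K δ := le_csSup hbdd ⟨_, rfl, ht.insert hy hfar⟩
  rw [Finset.card_insert_of_notMem hyt, hcard] at hle
  exact (Nat.lt_succ_self _).not_ge hle

variable [MeasurableSpace X] [BorelSpace X] {μ : Measure X} [IsFiniteMeasure μ]

lemma IsBallPacking.card_mul_le_measureReal {t : Finset X} (ht : IsBallPacking K δ t) {m : ℝ}
    (hm : ∀ x ∈ K, m ≤ μ.real (closedBall x δ)) : t.card * m ≤ μ.real univ := calc
  t.card * m = ∑ _x ∈ t, m := by simp
  _ ≤ ∑ x ∈ t, μ.real (closedBall x δ) := Finset.sum_le_sum fun x hx => hm x (ht.1 hx)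
  _ = μ.real (⋃ x ∈ t, closedBall x δ) :=
    (measureReal_biUnion_finset ht.2 fun _ _ => measurableSet_closedBall).symm
  _ ≤ μ.real univ := measureReal_mono (subset_univ _)

namespace IsAhlforsRegular

variable {s : ℝ}

lemma exists_cover_card_eq_packingNum (hμ : IsAhlforsRegular μ K s) (hμK : 0 < μ.real K) :
    ∃ c₁ > 0, ∃ c₂ > 0, ∃ R > 0, ∀ δ ∈ Ioc 0 R, ∃ t : Finset X, t.card = packingNum K δ ∧
      K ⊆ ⋃ x ∈ t, closedBall x (2 * δ) ∧ (t.card : ℝ) ∈ Icc (c₁ * δ ^ (-s)) (c₂ * δ ^ (-s)) := by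
  obtain ⟨a, ha, C, hC, R, hR, hball⟩ := hμ
  have hμuniv : 0 < μ.real univ := hμK.trans_le (measureReal_mono (subset_univ _))
  refine ⟨μ.real K / (C * 2 ^ s), by positivity, μ.real univ / a, by positivity, R / 2,
    by positivity, fun δ ⟨hδ, hδR⟩ => ?_⟩
  have hupper (t : Finset X) (ht : IsBallPacking K δ t) :
      (t.card : ℝ) ≤ μ.real univ / a * δ ^ (-s) := by
    rw [Real.rpow_neg hδ.le, ← div_eq_mul_inv, div_div, le_div_iff₀ (by positivity)]
    exact ht.card_mul_le_measureReal fun x hx => (hball x hx δ ⟨hδ, by linarith⟩).1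
  obtain ⟨t, ht, hcard, hcov⟩ := exists_isBallPacking_card_eq_packingNum hδ.le
    fun t ht => Nat.le_floor (hupper t ht)
  refine ⟨t, hcard, hcov, ?_, hupper t ht⟩
  rw [Real.rpow_neg hδ.le, ← div_eq_mul_inv, div_div, div_le_iff₀ (by positivity)]
  calc μ.real K
      ≤ μ.real (⋃ x ∈ t, closedBall x (2 * δ)) := measureReal_mono hcov (measure_ne_top _ _)
    _ ≤ ∑ x ∈ t, μ.real (closedBall x (2 * δ)) := measureReal_biUnion_finset_le _ _
    _ ≤ ∑ _x ∈ t, C * (2 * δ) ^ s :=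
      Finset.sum_le_sum fun x hx => (hball x (ht.1 hx) _ ⟨by positivity, by linarith⟩).2
    _ = t.card * (C * 2 ^ s * δ ^ s) := by
      rw [Finset.sum_const, nsmul_eq_mul, Real.mul_rpow two_pos.le hδ.le, mul_assoc C]

end IsAhlforsRegular

end Packing

lemma tendsto_log_div_neg_log {N : ℝ → ℝ} {s c₁ c₂ : ℝ} (hc₁ : 0 < c₁) (hc₂ : 0 < c₂)
    (hN : ∀ᶠ δ in 𝓝[>] 0, N δ ∈ Icc (c₁ * δ ^ (-s)) (c₂ * δ ^ (-s))) :
    Tendsto (fun δ => Real.log (N δ) / -Real.log δ) (𝓝[>] 0) (𝓝 s) := by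
  have hlog : Tendsto (fun δ => -Real.log δ) (𝓝[>] 0) atTop :=
    tendsto_neg_atBot_atTop.comp Real.tendsto_log_nhdsGT_zero
  have hmodel {c : ℝ} (hc : 0 < c) :
      Tendsto (fun δ => Real.log (c * δ ^ (-s)) / -Real.log δ) (𝓝[>] 0) (𝓝 s) := by
    have hlim : Tendsto (fun δ => Real.log c / -Real.log δ + s) (𝓝[>] 0) (𝓝 s) := by
      simpa using (hlog.const_div_atTop (Real.log c)).add_const s
    refine hlim.congr' ?_
    filter_upwards [self_mem_nhdsWithin, hlog.eventually_gt_atTop 0] with δ (hδ : 0 < δ) hδlog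
    rw [Real.log_mul hc.ne' (by positivity), Real.log_rpow hδ, add_div, neg_mul_comm,
      mul_div_cancel_right₀ _ hδlog.ne']
  refine tendsto_of_tendsto_of_tendsto_of_le_of_le' (hmodel hc₁) (hmodel hc₂) ?_ ?_ <;>
  filter_upwards [self_mem_nhdsWithin, hlog.eventually_gt_atTop 0, hN]
    with δ (hδ : 0 < δ) hδlog ⟨hle, hge⟩
  · gcongr
  · have : 0 < N δ := hle.trans_lt' (by positivity)
    gcongr

lemma IsAhlforsRegular.tendsto_log_packingNum {X : Type*} [MetricSpace X] [MeasurableSpace X]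
    [BorelSpace X] {μ : Measure X} [IsFiniteMeasure μ] {K : Set X} {s : ℝ}
    (hμ : IsAhlforsRegular μ K s) (hμK : 0 < μ.real K) :
    Tendsto (fun δ => Real.log (packingNum K δ) / -Real.log δ) (𝓝[>] 0) (𝓝 s) := by
  obtain ⟨c₁, hc₁, c₂, hc₂, R, hR, hcover⟩ := hμ.exists_cover_card_eq_packingNum hμK
  refine tendsto_log_div_neg_log hc₁ hc₂ ?_
  filter_upwards [Ioc_mem_nhdsGT hR] with δ hδ
  obtain ⟨t, hcard, -, hbounds⟩ := hcover δ hδ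
  rwa [hcard] at hbounds

section HausdorffMeasure

variable {X : Type*} [MetricSpace X] [MeasurableSpace X] [BorelSpace X] {K : Set X} {s R : ℝ}

lemma hausdorffMeasure_ne_top_of_closedBall_covers {c : ℝ} (hs : 0 ≤ s) (hR : 0 < R)
    (hcover : ∀ δ ∈ Ioc 0 R, ∃ t : Finset X,
      K ⊆ ⋃ x ∈ t, closedBall x (2 * δ) ∧ (t.card : ℝ) ≤ c * δ ^ (-s)) :
    μH[s] K ≠ ∞ := by
  choose! t hcov hcard using hcover
  have hdiam {δ : ℝ} (hδ : 0 < δ) (x : X) :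
      ediam (closedBall x (2 * δ)) ≤ ENNReal.ofReal (4 * δ) :=
    calc ediam (closedBall x (2 * δ)) ≤ 2 * ENNReal.ofReal (2 * δ) := by
          rw [← closedEBall_ofReal (by positivity)]
          exact ediam_closedEBall_le
      _ = ENNReal.ofReal (4 * δ) := by
          rw [← ENNReal.ofReal_ofNat 2, ← ENNReal.ofReal_mul two_pos.le]
          ring_nf
  have hsmall : ∀ᶠ δ in 𝓝[>] (0 : ℝ), δ ∈ Ioc 0 R := Ioc_mem_nhdsGT hR
  have hr : Tendsto (fun δ : ℝ => ENNReal.ofReal (4 * δ)) (𝓝[>] 0) (𝓝 0) :=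
    (Continuous.tendsto' (ENNReal.continuous_ofReal.comp (continuous_const_mul 4)) 0 0
      (by simp)).mono_left nhdsWithin_le_nhds
  refine ne_top_of_le_ne_top ENNReal.ofReal_ne_top (b := ENNReal.ofReal (c * 4 ^ s)) ?_
  refine (Measure.hausdorffMeasure_le_liminf_sum (ι := fun δ => t δ) s K _ hr
    (fun δ x => closedBall x (2 * δ)) (hsmall.mono fun δ hδ x => hdiam hδ.1 x)
    (hsmall.mono fun δ hδ => by simpa [iUnion_subtype] using hcov δ hδ)).trans
    (liminf_le_of_frequently_le' (Eventually.frequently ?_))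
  filter_upwards [hsmall] with δ hδ
  have hδ0 : 0 < δ := hδ.1
  calc ∑ x : t δ, ediam (closedBall (x : X) (2 * δ)) ^ s
      ≤ ∑ _x : t δ, ENNReal.ofReal (4 * δ) ^ s := by gcongr; exact hdiam hδ0 _
    _ = ENNReal.ofReal ((t δ).card * (4 * δ) ^ s) := by
        rw [ENNReal.ofReal_rpow_of_pos (by positivity), ENNReal.ofReal_mul (by positivity)]
        simp
    _ ≤ ENNReal.ofReal (c * δ ^ (-s) * (4 * δ) ^ s) := by gcongr; exact hcard δ hδ
    _ = ENNReal.ofReal (c * 4 ^ s) := by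
        rw [Real.mul_rpow (by positivity) hδ0.le, Real.rpow_neg hδ0.le]
        field_simp

lemma measure_le_mul_hausdorffMeasure {μ : Measure X} {C : ℝ≥0} (hC : C ≠ 0) (hR : 0 < R)
    (hK : MeasurableSet K)
    (hball : ∀ x ∈ K, ∀ r ∈ Ioc 0 R, μ (closedBall x r) ≤ C * ENNReal.ofReal r ^ s) :
    μ K ≤ C * μH[s] K := by
  have hC' : (C : ℝ≥0∞) ≠ 0 := by exact_mod_cast hC
  suffices h : (C : ℝ≥0∞)⁻¹ • μ.restrict K ≤ μH[s] by
    simpa [ENNReal.inv_mul_le_iff hC'] using h K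
  refine Measure.le_hausdorffMeasure s _ (ENNReal.ofReal (R / 2)) (by simpa) fun A hA => ?_
  rw [Measure.smul_apply, Measure.restrict_apply' hK, smul_eq_mul,
    ENNReal.inv_mul_le_iff hC' ENNReal.coe_ne_top]
  rcases (A ∩ K).eq_empty_or_nonempty with hAK | ⟨x, hxA, hxK⟩
  · simp [hAK]
  have hfin : ediam A ≠ ∞ := ne_top_of_le_ne_top ENNReal.ofReal_ne_top hA
  have hdiamR : diam A < R :=
    (ENNReal.toReal_le_of_le_ofReal (by positivity) hA).trans_lt (half_lt_self hR)
  have hlim : Tendsto (fun r => C * ENNReal.ofReal r ^ s) (𝓝[>] diam A) (𝓝 (C * ediam A ^ s)) :=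
    (Continuous.tendsto' ((ENNReal.continuous_const_mul ENNReal.coe_ne_top).comp
      (ENNReal.continuous_rpow_const.comp ENNReal.continuous_ofReal)) _ _
      (by simp [diam, ENNReal.ofReal_toReal hfin])).mono_left nhdsWithin_le_nhds
  refine ge_of_tendsto hlim ?_
  filter_upwards [Ioc_mem_nhdsGT hdiamR] with r hr
  have hsub : A ∩ K ⊆ closedBall x r := fun y hy =>
    (dist_le_diam_of_mem' hfin hy.1 hxA).trans hr.1.le
  exact (measure_mono hsub).trans (hball x hxK r ⟨diam_nonneg.trans_lt hr.1, hr.2⟩)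

lemma IsAhlforsRegular.dimH_eq {μ : Measure X} [IsFiniteMeasure μ] (hμ : IsAhlforsRegular μ K s)
    (hs : 0 ≤ s) (hK : MeasurableSet K) (hμK : 0 < μ.real K) : dimH K = ENNReal.ofReal s := by
  lift s to ℝ≥0 using hs
  rw [ENNReal.ofReal_coe_nnreal]
  refine dimH_of_hausdorffMeasure_ne_zero_ne_top (fun hzero => ?_) ?_
  · obtain ⟨_, -, C, hC, R, hR, hball⟩ := hμ
    have hle : μ K ≤ C.toNNReal * μH[s] K :=
      measure_le_mul_hausdorffMeasure (Real.toNNReal_pos.2 hC).ne' hR hK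
        fun x hx r hr => by
          rw [ENNReal.ofReal_rpow_of_pos hr.1, ← ENNReal.ofReal, ← ENNReal.ofReal_mul hC.le]
          exact (ENNReal.le_ofReal_iff_toReal_le (measure_ne_top _ _)
            (by have := hr.1; positivity)).2 (hball x hx r hr).2
    rw [hzero, mul_zero, nonpos_iff_eq_zero] at hle
    exact hμK.ne' (by rw [measureReal_def, hle, ENNReal.toReal_zero])
  · obtain ⟨_, -, c, -, R, hR, hcover⟩ := hμ.exists_cover_card_eq_packingNum hμK
    refine hausdorffMeasure_ne_top_of_closedBall_covers (c := c) s.coe_nonneg hR fun δ hδ => ?_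
    obtain ⟨t, -, hcov, hcard⟩ := hcover δ hδ
    exact ⟨t, hcov, hcard.2⟩

end HausdorffMeasure

lemma strictAnti_sum_rpow {ι : Type*} [Fintype ι] [Nonempty ι] {c : ι → ℝ}
    (hc : ∀ i, c i ∈ Ioo (0 : ℝ) 1) : StrictAnti fun t : ℝ => ∑ i, c i ^ t := fun _ _ hst =>
  Finset.sum_lt_sum_of_nonempty Finset.univ_nonempty fun i _ =>
    Real.rpow_lt_rpow_of_exponent_gt (hc i).1 (hc i).2 hst

section SimilarityDimension

variable {ι : Type*} [Fintype ι] {c : ι → ℝ} {s : ℝ}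

lemma nonempty_of_sum_rpow_eq_one (hsum : ∑ i, c i ^ s = 1) : Nonempty ι := by
  by_contra hι
  rw [not_nonempty_iff] at hι
  simp at hsum

lemma nonneg_of_sum_rpow_eq_one (hc : ∀ i, c i ∈ Ioo (0 : ℝ) 1) (hsum : ∑ i, c i ^ s = 1) :
    0 ≤ s := by
  have := nonempty_of_sum_rpow_eq_one hsum
  refine (strictAnti_sum_rpow hc).le_iff_ge.1 ?_
  simp [hsum, Nat.one_le_iff_ne_zero]

lemma exists_isAhlforsRegular {X : Type*} [MetricSpace X] [CompleteSpace X] [MeasurableSpace X]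
    [BorelSpace X] {f : ι → X → X} (hc : ∀ i, c i ∈ Ioo (0 : ℝ) 1)
    (hf : ∀ i, IsSimilarity (f i) (c i)) {K : Set X} (hcpt : IsCompact K)
    (hK : K = ⋃ i, f i '' K) (hdiam : 0 < diam K) (hsum : ∑ i, c i ^ s = 1) {Q M : ℝ} (hQ : 0 ≤ Q)
    (hM : 0 < M) (hball : ∀ x : X, ∀ r > 0, μH[Q] (closedBall x r) ≤ ENNReal.ofReal (M * r ^ Q))
    {V : Set X} (hV : MeasurableSet V) (hVbdd : Bornology.IsBounded V) (hV0 : μH[Q] V ≠ 0)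
    (hVsub : ∀ i, f i '' V ⊆ V) (hVdisj : Pairwise fun i j => Disjoint (f i '' V) (f j '' V)) :
    ∃ ν : Measure X, IsProbabilityMeasure ν ∧ (∀ᵐ x ∂ν, x ∈ K) ∧ IsAhlforsRegular ν K s := by
  have := nonempty_of_sum_rpow_eq_one hsum
  have hs := nonneg_of_sum_rpow_eq_one hc hsum
  have hne : K.Nonempty := nonempty_iff_ne_empty.2 fun h => by simp [h] at hdiam
  obtain ⟨i₀, hmin⟩ := Finite.exists_min c
  obtain ⟨i₁, hmax⟩ := Finite.exists_max c
  have ha : 0 < c i₀ := (hc i₀).1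
  have hb : c i₁ < 1 := (hc i₁).2
  have hcI (i : ι) : c i ∈ Icc (c i₀) (c i₁) := ⟨hmin i, hmax i⟩
  obtain ⟨ν, hνprob, hν, hνK⟩ := IsSelfSimilarMeasure.exists_isProbabilityMeasure
    (fun i => Real.rpow_nonneg (hc i).1.le s) hsum (Real.toNNReal_lt_one.2 hb)
    (fun i => (hf i).lipschitzWith.weaken (Real.toNNReal_le_toNNReal (hmax i))) hne
    hcpt.isComplete fun i => mapsTo_iff_image_subset.2 ((subset_iUnion _ i).trans hK.ge)
  let E : ℝ := diam (V ∪ K) + 1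
  have hE (v : X) (hv : v ∈ V) (y : X) (hy : y ∈ K) : dist v y < E :=
    (dist_le_diam_of_mem (hVbdd.union hcpt.isBounded) (.inl hv) (.inr hy)).trans_lt (lt_add_one _)
  have hE0 : 0 < E := by positivity
  obtain ⟨x₀, hx₀⟩ := hne
  have hVfin : μH[Q] V ≠ ∞ := ne_top_of_le_ne_top ENNReal.ofReal_ne_top
    ((measure_mono fun v hv => mem_closedBall.2 (hE v hv x₀ hx₀).le).trans (hball x₀ E hE0))
  have hV0' : 0 < (μH[Q]).real V := ENNReal.toReal_pos hV0 hVfin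
  refine ⟨ν, hνprob, hνK, (c i₀ / diam K) ^ s, by positivity,
    M * (E + 1) ^ Q / (c i₀ ^ Q * (μH[Q]).real V), by positivity, min (diam K / c i₀) (1 / c i₀),
    by positivity, fun x hx r hr => ⟨?_, ?_⟩⟩
  · have hr0 : 0 < r := hr.1
    rw [← Real.mul_rpow (by positivity) hr0.le, div_mul_eq_mul_div, mul_div_assoc]
    exact hν.rpow_le_measureReal_closedBall hs ha hb hcI hf hνK hcpt.isBounded hK.le hdiam
      ⟨hr0, hr.2.trans (min_le_left _ _)⟩ x hx
  · exact hν.measureReal_closedBall_le hs hQ ha hb hcI hf hνK hV hV0 hVfin hVsub hVdisj hE0 hE hM.le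
      hball ⟨hr.1, hr.2.trans (min_le_right _ _)⟩ x

end SimilarityDimension

/-! ### Fractal dimension III -/

section DimensionIII

variable {X : Type*} [MetricSpace X] {k : ℕ} {f : Fin k → X → X} {c : Fin k → ℝ} {K : Set X}
  {t : ℝ}

lemma sum_diam_wordComp_rpow (hc : ∀ i, 0 < c i) (hf : ∀ i, IsSimilarity (f i) (c i)) (ht : 0 ≤ t)
    (n : ℕ) :
    ∑ ω : Fin n → Fin k, ENNReal.ofReal (diam (wordComp f ω '' K)) ^ t =
      ENNReal.ofReal (diam K ^ t * (∑ i, c i ^ t) ^ n) := by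
  have hprod (ω : Fin n → Fin k) : 0 < ∏ i, c (ω i) := Finset.prod_pos fun i _ => hc _
  have hword (ω : Fin n → Fin k) : ENNReal.ofReal (diam (wordComp f ω '' K)) ^ t =
      ENNReal.ofReal (diam K ^ t * ∏ i, c (ω i) ^ t) := by
    rw [(IsSimilarity.wordComp hf ω).diam_image (hprod ω),
      ENNReal.ofReal_rpow_of_nonneg (mul_nonneg (hprod ω).le diam_nonneg) ht,
      Real.mul_rpow (hprod ω).le diam_nonneg, Real.finsetProd_rpow _ _ fun i _ => (hc _).le,
      mul_comm]
  rw [Fintype.sum_pow, Finset.mul_sum, ENNReal.ofReal_sum_of_nonneg fun ω _ => ?_]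
  · exact Finset.sum_congr rfl fun ω _ => hword ω
  · exact mul_nonneg (by positivity) (Finset.prod_nonneg fun i _ => Real.rpow_nonneg (hc _).le _)

lemma H3_eq_zero (hc : ∀ i, 0 < c i) (hf : ∀ i, IsSimilarity (f i) (c i)) (ht : 0 ≤ t)
    (hlt : ∑ i, c i ^ t < 1) : H3 f K t = 0 := by
  have hlim : Tendsto (fun n : ℕ => ENNReal.ofReal (diam K ^ t * (∑ i, c i ^ t) ^ n)) atTop
      (𝓝 0) := by
    have hpow := tendsto_pow_atTop_nhds_zero_of_lt_one
      (Finset.sum_nonneg fun i _ => Real.rpow_nonneg (hc i).le t) hlt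
    simpa using ENNReal.tendsto_ofReal (hpow.const_mul (diam K ^ t))
  refine ENNReal.iSup_eq_zero.2 fun n => nonpos_iff_eq_zero.1 (ge_of_tendsto hlim ?_)
  filter_upwards [eventually_ge_atTop n] with m hm
  rw [← sum_diam_wordComp_rpow hc hf ht]
  exact iInf_le (fun m : {m : ℕ // n ≤ m} => ∑ ω : Fin m.1 → Fin k,
    ENNReal.ofReal (diam (wordComp f ω '' K)) ^ t) ⟨m, hm⟩

lemma H3_ne_zero (hc : ∀ i, 0 < c i) (hf : ∀ i, IsSimilarity (f i) (c i)) (hdiam : 0 < diam K)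
    (ht : 0 ≤ t) (hge : 1 ≤ ∑ i, c i ^ t) : H3 f K t ≠ 0 := by
  have hpos : 0 < ENNReal.ofReal (diam K ^ t) := ENNReal.ofReal_pos.2 (by positivity)
  refine (hpos.trans_le ((le_iInf fun m => ?_).trans (le_iSup (H3pre f K t) 0))).ne'
  rw [sum_diam_wordComp_rpow hc hf ht]
  exact ENNReal.ofReal_le_ofReal (le_mul_of_one_le_right (by positivity) (one_le_pow₀ hge))

lemma sInf_H3_eq_zero {s : ℝ} (hc : ∀ i, c i ∈ Ioo (0 : ℝ) 1) (hf : ∀ i, IsSimilarity (f i) (c i))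
    (hdiam : 0 < diam K) (hsum : ∑ i, c i ^ s = 1) : sInf {t : ℝ | 0 ≤ t ∧ H3 f K t = 0} = s := by
  have := nonempty_of_sum_rpow_eq_one hsum
  have hs := nonneg_of_sum_rpow_eq_one hc hsum
  have hanti := strictAnti_sum_rpow hc
  suffices h : {t : ℝ | 0 ≤ t ∧ H3 f K t = 0} = Ioi s by rw [h, csInf_Ioi]
  ext t
  refine ⟨fun ⟨ht, hzero⟩ => ?_, fun hst => ?_⟩
  · by_contra hts
    exact H3_ne_zero (fun i => (hc i).1) hf hdiam ht (hsum.ge.trans (hanti.antitone (not_lt.1 hts)))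
      hzero
  · have ht : 0 ≤ t := hs.trans (le_of_lt hst)
    exact ⟨ht, H3_eq_zero (fun i => (hc i).1) hf ht ((hanti hst).trans_eq hsum)⟩

end DimensionIII

/-! ### Equality of the dimensions -/

theorem dim3_eq_box_eq_hausdorff_general {X : Type*} [MetricSpace X] [CompleteSpace X]
    [MeasurableSpace X] [BorelSpace X] {Q M : ℝ} (hQ : 0 ≤ Q) (hM : 0 < M)
    (hball : ∀ x : X, ∀ r > 0, μH[Q] (closedBall x r) ≤ ENNReal.ofReal (M * r ^ Q)) {k : ℕ}
    (f : Fin k → X → X) (c : Fin k → ℝ) (hc : ∀ i, c i ∈ Ioo (0 : ℝ) 1)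
    (hf : ∀ i, IsSimilarity (f i) (c i)) {V : Set X} (hV : MeasurableSet V)
    (hVbdd : Bornology.IsBounded V) (hV0 : μH[Q] V ≠ 0) (hVsub : ∀ i, f i '' V ⊆ V)
    (hVdisj : Pairwise fun i j => Disjoint (f i '' V) (f j '' V)) (K : Set X) (hcpt : IsCompact K)
    (hK : K = ⋃ i, f i '' K) (hdiam : 0 < diam K) (s : ℝ) (hsum : ∑ i, c i ^ s = 1) :
    sInf {t : ℝ | 0 ≤ t ∧ H3 f K t = 0} = s ∧
      Tendsto (fun δ : ℝ => Real.log (packingNum K δ) / (-Real.log δ)) (𝓝[>] (0 : ℝ)) (𝓝 s) ∧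
      dimH K = ENNReal.ofReal s := by
  obtain ⟨ν, hνprob, hνK, hνreg⟩ := exists_isAhlforsRegular hc hf hcpt hK hdiam hsum hQ hM hball
    hV hVbdd hV0 hVsub hVdisj
  have hν : 0 < ν.real K := by
    rw [measureReal_def, (mem_ae_iff_prob_eq_one hcpt.measurableSet).1 hνK]
    simp
  exact ⟨sInf_H3_eq_zero hc hf hdiam hsum, hνreg.tendsto_log_packingNum hν,
    hνreg.dimH_eq (nonneg_of_sum_rpow_eq_one hc hsum) hcpt.measurableSet hν⟩

lemma hausdorffMeasure_finrank_closedBall {E : Type*} [NormedAddCommGroup E] [NormedSpace ℝ E]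
    [FiniteDimensional ℝ E] [MeasurableSpace E] [BorelSpace E] (x : E) {r : ℝ} (hr : 0 ≤ r) :
    μH[Module.finrank ℝ E] (closedBall x r) = ENNReal.ofReal
      ((μH[Module.finrank ℝ E]).real (closedBall (0 : E) 1) * r ^ (Module.finrank ℝ E : ℝ)) := by
  rw [Measure.addHaar_closedBall' _ x hr, ENNReal.ofReal_mul measureReal_nonneg, mul_comm,
    Real.rpow_natCast, ofReal_measureReal measure_closedBall_lt_top.ne]

/-- under the OSC, the fractal dimension III, the box dimension and the
Hausdorff dimension of the attractor all equal the unique `s` with `∑ cᵢ^s = 1`. -/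
theorem dim3_eq_box_eq_hausdorff {d k : ℕ}
    (f : Fin k → EuclideanSpace ℝ (Fin d) → EuclideanSpace ℝ (Fin d))
    (c : Fin k → ℝ) (hc : ∀ i, c i ∈ Set.Ioo (0 : ℝ) 1)
    (hf : ∀ i, IsSimilarity (f i) (c i)) (hosc : OSC f)
    (K : Set (EuclideanSpace ℝ (Fin d))) (hne : K.Nonempty) (hcpt : IsCompact K)
    (hK : K = ⋃ i, f i '' K) (hdiam : 0 < Metric.diam K)
    (s : ℝ) (hs : 0 ≤ s) (hsum : ∑ i, c i ^ s = 1) :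
    sInf {t : ℝ | 0 ≤ t ∧ H3 f K t = 0} = s ∧
      Filter.Tendsto (fun δ : ℝ => Real.log (packingNum K δ) / (-Real.log δ))
        (𝓝[>] (0 : ℝ)) (𝓝 s) ∧
      dimH K = ENNReal.ofReal s := by
  obtain ⟨V, hVne, hVopen, hVbdd, hVsub, hVdisj⟩ := hosc
  exact dim3_eq_box_eq_hausdorff_general (Nat.cast_nonneg _)
    (ENNReal.toReal_pos (measure_closedBall_pos _ 0 one_pos).ne' measure_closedBall_lt_top.ne)
    (fun x r hr => (hausdorffMeasure_finrank_closedBall x hr.le).le) f c hc hf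
    hVopen.measurableSet hVbdd (hVopen.measure_pos _ hVne).ne' hVsub hVdisj K hcpt hK hdiam s hsum
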